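/- arXiv:1208.5241 — 2 statements merged into one kernel-verified Lean document; each statement's English description precedes it below -/
import Mathlib

section
/- For every t > 0 and x ∈ S¹, the space derivative of the solution satisfies u_x(t,x) ≤ min(D, σ⁻¹ t⁻¹), where σ is the strong convexity constant of f and D = max(|u₀|_{L¹}⁻¹, |∂_x u₀|_{L∞}). -/
open MeasureTheory Set
open scoped ENNReal

/-- The `L^p` norm (on the circle, i.e. over one period `(0,1]`) of the `m`-th
derivative of a function `v : ℝ → ℝ` (identified with a function on `S¹ = ℝ/ℤ`). -/
noncomputable def sobLp (m : ℕ) (p : ℝ≥0∞) (v : ℝ → ℝ) : ℝ :=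
  (eLpNorm (iteratedDeriv m v) p (volume.restrict (Ioc (0:ℝ) 1))).toReal

/-- `u` is a smooth, space-periodic, zero-mean-value solution of the generalised
Burgers equation `u_t + f'(u) u_x - ν u_xx = 0` with strongly convex `f` and
nonzero initial condition. -/
structure IsBurgersSolution (f : ℝ → ℝ) (σ ν : ℝ) (u : ℝ → ℝ → ℝ) : Prop where
  hf : ContDiff ℝ (⊤ : ℕ∞) f
  hσ : 0 < σ
  hconv : ∀ y, σ ≤ iteratedDeriv 2 f y
  hν : 0 < ν
  hu : ContDiffOn ℝ (⊤ : ℕ∞) (Function.uncurry u) (Ici (0:ℝ) ×ˢ univ)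
  hper : ∀ t x, u t (x + 1) = u t x
  hpde : ∀ t, 0 < t → ∀ x,
    deriv (fun s => u s x) t + deriv f (u t x) * deriv (u t) x
      - ν * deriv (deriv (u t)) x = 0
  hmean : ∀ t, 0 ≤ t → ∫ x in Ioc (0:ℝ) 1, u t x = 0
  hinit : ∃ x, u 0 x ≠ 0

/-- The quantity `D = max(|u₀|₁⁻¹, |u₀|_{1,∞})`. -/
noncomputable def burgersD (u : ℝ → ℝ → ℝ) : ℝ :=
  max (sobLp 0 1 (u 0))⁻¹ (sobLp 1 ⊤ (u 0))

/-- `T₁ = D⁻² C̃⁻¹ / 4`. -/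
noncomputable def burgersT₁ (D Ct : ℝ) : ℝ := (D ^ 2)⁻¹ * Ct⁻¹ / 4

/-- `T₂ = max(3T₁/2, 2Dσ⁻¹)`. -/
noncomputable def burgersT₂ (σ D Ct : ℝ) : ℝ :=
  max (3 / 2 * burgersT₁ D Ct) (2 * D * σ⁻¹)

/-- Time average over `[T₁, T₂]`. -/
noncomputable def timeAvg (T₁ T₂ : ℝ) (A : ℝ → ℝ) : ℝ :=
  (T₂ - T₁)⁻¹ * ∫ t in T₁..T₂, A t

/-- The structure function `S_p(ℓ)`. -/
noncomputable def structFun (T₁ T₂ : ℝ) (u : ℝ → ℝ → ℝ) (p ℓ : ℝ) : ℝ :=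
  timeAvg T₁ T₂ (fun t => ∫ x in Ioc (0:ℝ) 1, |u t (x + ℓ) - u t x| ^ p)

/-!
Put `v = u_x`. Differentiating the equation in `x` gives
`v_t = ν v_xx - f''(u) v² - f'(u) v_x`, so at a spatial maximum of `v`, where `v_x = 0` and
`v_xx ≤ 0`, one has `v_t ≤ -σ v²`. By periodicity the maximum over `x` is attained, so `v` is
dominated by the solution `M / (1 + σ M t)` of the Riccati equation `m' = -σ m²`, `m(0) = M`, for
every upper bound `M` of `∂_x u₀`, and `M / (1 + σ M t)` is below both `M` and `1 / (σ t)`.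
-/

open Filter Topology Function

section MaximumPrinciple

lemma deriv_deriv_nonpos_of_isLocalMax {h : ℝ → ℝ} {x : ℝ} (hmax : IsLocalMax h x)
    (hc : ContinuousAt h x) : deriv (deriv h) x ≤ 0 := by
  by_contra! hpos
  have hmin : IsLocalMin h x := isLocalMin_of_deriv_deriv_pos hpos hmax.deriv_eq_zero hc
  have hconst : h =ᶠ[𝓝 x] fun _ ↦ h x := by
    filter_upwards [hmin, hmax] with y hy hy' using le_antisymm hy' hy
  have hzero : deriv (deriv h) x = 0 := by
    simpa only [deriv_const', deriv_const] using hconst.deriv.deriv_eq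
  exact hpos.ne' hzero

lemma nonneg_of_hasDerivWithinAt_Iic_of_isMaxOn {h : ℝ → ℝ} {h' a t : ℝ} (hat : a < t)
    (hmax : IsMaxOn h (Icc a t) t) (hd : HasDerivWithinAt h h' (Iic t) t) : 0 ≤ h' := by
  have hcone : a - t ∈ posTangentConeAt (Icc a t) t :=
    sub_mem_posTangentConeAt_of_segment_subset <|
      (convex_Icc a t).segment_subset (right_mem_Icc.2 hat.le) (left_mem_Icc.2 hat.le)
  have hle : (a - t) * h' ≤ 0 := by
    simpa using hmax.localize.hasFDerivWithinAt_nonpos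
      (hd.mono Icc_subset_Iic_self).hasFDerivWithinAt hcone
  exact nonneg_of_mul_nonpos_right hle (sub_neg.2 hat)

variable {X : Type*} [TopologicalSpace X] {K : Set X}

lemma le_of_hasDerivWithinAt_neg_of_isMaxOn {φ : ℝ → X → ℝ} {a b C : ℝ} (hK : IsCompact K)
    (hφ : ContinuousOn (uncurry φ) (Icc a b ×ˢ K)) (ha : ∀ x ∈ K, φ a x ≤ C)
    (hneg : ∀ t ∈ Ioc a b, ∀ x ∈ K, IsMaxOn (φ t) K x → C < φ t x →
      ∃ φ' < 0, HasDerivWithinAt (fun s ↦ φ s x) φ' (Iic t) t)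
    {t : ℝ} (ht : t ∈ Icc a b) {x : X} (hx : x ∈ K) : φ t x ≤ C := by
  by_contra! hlt
  obtain ⟨⟨t₁, x₁⟩, ⟨ht₁, hx₁⟩, hmax⟩ :=
    (isCompact_Icc.prod hK).exists_isMaxOn ⟨(t, x), ht, hx⟩ hφ
  have hle : ∀ s ∈ Icc a b, ∀ y ∈ K, φ s y ≤ φ t₁ x₁ := fun s hs y hy ↦ hmax (mk_mem_prod hs hy)
  have hgt : C < φ t₁ x₁ := hlt.trans_le (hle t ht x hx)
  have hat₁ : a < t₁ := ht₁.1.lt_of_ne (by rintro rfl; exact (ha x₁ hx₁).not_gt hgt)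
  obtain ⟨φ', hφ', hd⟩ := hneg t₁ ⟨hat₁, ht₁.2⟩ x₁ hx₁ (hle t₁ ht₁) hgt
  have htime : IsMaxOn (fun s ↦ φ s x₁) (Icc a t₁) t₁ :=
    fun s hs ↦ hle s ⟨hs.1, hs.2.trans ht₁.2⟩ x₁ hx₁
  exact hφ'.not_ge (nonneg_of_hasDerivWithinAt_Iic_of_isMaxOn hat₁ htime hd)

lemma le_of_hasDerivWithinAt_nonpos_of_isMaxOn {φ : ℝ → X → ℝ} {a b C : ℝ} (hK : IsCompact K)
    (hφ : ContinuousOn (uncurry φ) (Icc a b ×ˢ K)) (ha : ∀ x ∈ K, φ a x ≤ C)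
    (hnonpos : ∀ t ∈ Ioc a b, ∀ x ∈ K, IsMaxOn (φ t) K x → C < φ t x →
      ∃ φ' ≤ 0, HasDerivWithinAt (fun s ↦ φ s x) φ' (Iic t) t)
    {t : ℝ} (ht : t ∈ Icc a b) {x : X} (hx : x ∈ K) : φ t x ≤ C := by
  by_contra! hlt
  obtain ⟨ε, hε, hεt⟩ := exists_pos_mul_lt (sub_pos.2 hlt) (t - a)
  -- Tilting leaves the spatial maxima unchanged and makes the time derivative strictly negative.
  have htilt : φ t x - ε * (t - a) ≤ C := by
    refine le_of_hasDerivWithinAt_neg_of_isMaxOn (φ := fun s y ↦ φ s y - ε * (s - a)) hK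
      (hφ.sub (by fun_prop)) (by simpa using ha) (fun s hs y hy hmax hgt ↦ ?_) ht hx
    have hgt' : C < φ s y :=
      hgt.trans_le (sub_le_self _ (mul_nonneg hε.le (sub_nonneg.2 hs.1.le)))
    have hmax' : IsMaxOn (φ s) K y := fun z hz ↦ (sub_le_sub_iff_right (ε * (s - a))).1 (hmax hz)
    obtain ⟨φ', hφ', hd⟩ := hnonpos s hs y hy hmax' hgt'
    have hlin : HasDerivWithinAt (fun r ↦ ε * (r - a)) (ε * 1) (Iic s) s :=
      ((hasDerivWithinAt_id s (Iic s)).sub_const a).const_mul ε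
    exact ⟨φ' - ε * 1, by linarith, hd.sub hlin⟩
  linarith

lemma le_div_of_hasDerivWithinAt_le_neg_mul_sq {w : ℝ → X → ℝ} {σ M T : ℝ} (hK : IsCompact K)
    (hσ : 0 ≤ σ) (hM : 0 ≤ M) (hw : ContinuousOn (uncurry w) (Icc 0 T ×ˢ K))
    (h0 : ∀ x ∈ K, w 0 x ≤ M)
    (hriccati : ∀ t ∈ Ioc 0 T, ∀ x ∈ K, IsMaxOn (w t) K x →
      ∃ w' ≤ -(σ * w t x ^ 2), HasDerivWithinAt (fun s ↦ w s x) w' (Iic t) t)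
    {t : ℝ} (ht : t ∈ Icc 0 T) {x : X} (hx : x ∈ K) : w t x ≤ M / (1 + σ * M * t) := by
  have hpos : ∀ s, 0 ≤ s → 0 < 1 + σ * M * s := fun s hs ↦ by positivity
  rw [le_div_iff₀' (hpos t ht.1)]
  refine le_of_hasDerivWithinAt_nonpos_of_isMaxOn (φ := fun s y ↦ (1 + σ * M * s) * w s y) hK
    (ContinuousOn.mul (by fun_prop) hw) (by simpa using h0) (fun s hs y hy hmax hgt ↦ ?_) ht hx
  have hs0 := hpos s hs.1.le
  have hmax' : IsMaxOn (w s) K y := fun z hz ↦ le_of_mul_le_mul_left (hmax hz) hs0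
  obtain ⟨w', hw', hd⟩ := hriccati s hs y hy hmax'
  have hwpos : 0 < w s y := pos_of_mul_pos_right (hM.trans_lt hgt) hs0.le
  have hlin : HasDerivWithinAt (fun r ↦ 1 + σ * M * r) (σ * M * 1) (Iic s) s :=
    ((hasDerivWithinAt_id s (Iic s)).const_mul (σ * M)).const_add 1
  refine ⟨_, ?_, hlin.mul hd⟩
  calc σ * M * 1 * w s y + (1 + σ * M * s) * w'
      ≤ σ * M * 1 * w s y + (1 + σ * M * s) * -(σ * w s y ^ 2) := by gcongr
    _ = -(σ * w s y * ((1 + σ * M * s) * w s y - M)) := by ring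
    _ ≤ 0 := neg_nonpos.2 (mul_nonneg (by positivity) (sub_nonneg.2 hgt.le))

lemma div_one_add_mul_le_min {σ M t : ℝ} (hσ : 0 < σ) (hM : 0 ≤ M) (ht : 0 < t) :
    M / (1 + σ * M * t) ≤ min M (σ⁻¹ * t⁻¹) := by
  refine le_min (div_le_self hM (le_add_of_nonneg_right (by positivity))) ?_
  rw [div_le_iff₀ (by positivity)]
  have hexpand : σ⁻¹ * t⁻¹ * (1 + σ * M * t) = σ⁻¹ * t⁻¹ + M := by field_simp
  rw [hexpand]
  exact le_add_of_nonneg_left (by positivity)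

end MaximumPrinciple

section PartialDerivatives

variable {E : Type*} [NormedAddCommGroup E] [NormedSpace ℝ E]

lemma hasDerivAt_prodMk_left_comp {G : ℝ × ℝ → E} {G' : ℝ × ℝ →L[ℝ] E} {t x : ℝ}
    (h : HasFDerivAt G G' (t, x)) : HasDerivAt (fun s ↦ G (s, x)) (G' (1, 0)) t :=
  h.comp_hasDerivAt (f := fun s ↦ (s, x)) t ((hasDerivAt_id t).prodMk (hasDerivAt_const t x))

lemma hasDerivAt_prodMk_right_comp {G : ℝ × ℝ → E} {G' : ℝ × ℝ →L[ℝ] E} {t x : ℝ}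
    (h : HasFDerivAt G G' (t, x)) : HasDerivAt (fun y ↦ G (t, y)) (G' (0, 1)) x :=
  h.comp_hasDerivAt (f := fun y ↦ (t, y)) x ((hasDerivAt_const x t).prodMk (hasDerivAt_id x))

lemma contDiff_of_contDiffOn_uncurry {n : WithTop ℕ∞} {u : ℝ → ℝ → E} {S : Set ℝ}
    (hu : ContDiffOn ℝ n (uncurry u) (S ×ˢ univ)) {t : ℝ} (ht : t ∈ S) : ContDiff ℝ n (u t) :=
  hu.comp_contDiff (contDiff_prodMk_right t) fun y ↦ ⟨ht, mem_univ y⟩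

lemma continuousOn_deriv_uncurry {u : ℝ → ℝ → E} {S : Set ℝ} (hS : UniqueDiffOn ℝ S)
    (hu : ContDiffOn ℝ 1 (uncurry u) (S ×ˢ univ)) :
    ContinuousOn (fun p : ℝ × ℝ ↦ deriv (u p.1) p.2) (S ×ˢ univ) := by
  have hcont : ContinuousOn (fun p ↦ fderivWithin ℝ (uncurry u) (S ×ˢ univ) p (0, 1))
      (S ×ˢ univ) :=
    (hu.continuousOn_fderivWithin (hS.prod uniqueDiffOn_univ) le_rfl).clm_apply
      continuousOn_const
  refine hcont.congr fun ⟨t, x⟩ hp ↦ HasDerivAt.deriv ?_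
  have hline : HasDerivWithinAt (fun y : ℝ ↦ (t, y)) (0, 1) univ x :=
    ((hasDerivAt_const x t).prodMk (hasDerivAt_id x)).hasDerivWithinAt
  exact hasDerivWithinAt_univ.1 <|
    (hu.differentiableOn one_ne_zero _ hp).hasFDerivWithinAt.comp_hasDerivWithinAt x hline
      fun y _ ↦ ⟨hp.1, mem_univ y⟩

lemma exists_hasDerivAt_mixed_partials {u : ℝ → ℝ → E} {t x : ℝ}
    (hu : ContDiffAt ℝ 2 (uncurry u) (t, x)) :
    ∃ m, HasDerivAt (fun s ↦ deriv (u s) x) m t ∧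
      HasDerivAt (fun y ↦ deriv (fun s ↦ u s y) t) m x := by
  set U'' := fderiv ℝ (fderiv ℝ (uncurry u)) (t, x)
  have hU'' : HasFDerivAt (fderiv ℝ (uncurry u)) U'' (t, x) :=
    ((hu.fderiv_right (m := 1) le_rfl).differentiableAt one_ne_zero).hasFDerivAt
  have hdiff : ∀ᶠ p in 𝓝 (t, x), DifferentiableAt ℝ (uncurry u) p :=
    (hu.eventually (by simp)).mono fun p hp ↦ hp.differentiableAt two_ne_zero
  have hsymm : U'' (0, 1) (1, 0) = U'' (1, 0) (0, 1) := hu.isSymmSndFDerivAt (by simp) _ _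
  refine ⟨U'' (1, 0) (0, 1), ?_, ?_⟩
  · have hdt : HasDerivAt (fun s ↦ fderiv ℝ (uncurry u) (s, x) (0, 1)) (U'' (1, 0) (0, 1)) t := by
      simpa using (hasDerivAt_prodMk_left_comp hU'').clm_apply (hasDerivAt_const t (0, 1))
    refine hdt.congr_of_eventuallyEq ?_
    filter_upwards [(Continuous.prodMk_left x).continuousAt.eventually hdiff] with s hs
    exact (hasDerivAt_prodMk_right_comp hs.hasFDerivAt).deriv
  · have hdx : HasDerivAt (fun y ↦ fderiv ℝ (uncurry u) (t, y) (1, 0)) (U'' (0, 1) (1, 0)) x := by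
      simpa using (hasDerivAt_prodMk_right_comp hU'').clm_apply (hasDerivAt_const x (1, 0))
    rw [← hsymm]
    refine hdx.congr_of_eventuallyEq ?_
    filter_upwards [(Continuous.prodMk_right t).continuousAt.eventually hdiff] with y hy
    exact (hasDerivAt_prodMk_left_comp hy.hasFDerivAt).deriv

end PartialDerivatives

section Periodic

lemma periodic_deriv {𝕜 E : Type*} [NontriviallyNormedField 𝕜] [NormedAddCommGroup E]
    [NormedSpace 𝕜 E] {g : 𝕜 → E} {c : 𝕜} (hg : Periodic g c) : Periodic (deriv g) c := fun x ↦ by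
  rw [← deriv_comp_add_const, hg.funext]

lemma norm_le_toReal_eLpNorm_top_of_periodic {E : Type*} [NormedAddCommGroup E] {g : ℝ → E}
    {L : ℝ} (hc : Continuous g) (hper : Periodic g L) (hL : 0 < L) (x : ℝ) :
    ‖g x‖ ≤ (eLpNorm g ⊤ (volume.restrict (Ioc 0 L))).toReal := by
  set μ := volume.restrict (Ioc 0 L)
  set C := (eLpNorm g ⊤ μ).toReal
  have hfinite : eLpNorm g ⊤ μ ≠ ⊤ := by
    obtain ⟨B, hB⟩ := (hper.isBounded_of_continuous hL.ne' hc).exists_norm_le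
    exact (memLp_top_of_bound hc.aestronglyMeasurable B
      (Eventually.of_forall fun y ↦ hB _ (mem_range_self y))).eLpNorm_ne_top
  have hae : ∀ᵐ y ∂μ, ‖g y‖ ≤ C := by
    filter_upwards [enorm_ae_le_eLpNormEssSup g μ] with y hy
    rw [← eLpNorm_exponent_top] at hy
    simpa only [toReal_enorm] using ENNReal.toReal_mono hfinite hy
  have heqOn : EqOn (fun y ↦ max ‖g y‖ C) (fun _ ↦ C) (Ioc 0 L) :=
    Measure.eqOn_Ioc_of_ae_eq volume (hae.mono fun y hy ↦ max_eq_right hy)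
      (by fun_prop) continuousOn_const
  obtain ⟨z, hz, hxz⟩ := hper.exists_mem_Ioc hL x 0
  rw [hxz]
  exact max_eq_right_iff.1 (heqOn (by rwa [zero_add] at hz))

lemma deriv_le_sobLp_one_top {v : ℝ → ℝ} (hc : Continuous (deriv v)) (hper : Periodic v 1)
    (x : ℝ) : deriv v x ≤ sobLp 1 ⊤ v := by
  rw [sobLp, iteratedDeriv_one]
  exact (le_abs_self _).trans
    (norm_le_toReal_eLpNorm_top_of_periodic hc (periodic_deriv hper) one_pos x)

end Periodic

section Burgers

variable {f : ℝ → ℝ} {σ ν : ℝ} {u : ℝ → ℝ → ℝ}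

lemma hasDerivAt_deriv_of_burgers {t x : ℝ} (hf : DifferentiableAt ℝ (deriv f) (u t x))
    (hu : ContDiffAt ℝ 2 (uncurry u) (t, x))
    (hpde : ∀ᶠ y in 𝓝 x, deriv (fun s ↦ u s y) t + deriv f (u t y) * deriv (u t) y
      - ν * deriv (deriv (u t)) y = 0) :
    HasDerivAt (fun s ↦ deriv (u s) x)
      (ν * deriv (deriv (deriv (u t))) x
        - (deriv (deriv f) (u t x) * deriv (u t) x ^ 2
          + deriv f (u t x) * deriv (deriv (u t)) x)) t := by
  obtain ⟨m, hmt, hmx⟩ := exists_hasDerivAt_mixed_partials hu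
  have hslice : ContDiffAt ℝ 2 (u t) x :=
    hu.comp (f := fun y ↦ (t, y)) x (contDiffAt_const.prodMk contDiffAt_id)
  have hux : HasDerivAt (u t) (deriv (u t) x) x :=
    (hslice.differentiableAt two_ne_zero).hasDerivAt
  have huxx : HasDerivAt (deriv (u t)) (deriv (deriv (u t)) x) x :=
    ((hslice.derivWithin (m := 1) le_rfl).differentiableAt one_ne_zero).hasDerivAt
  have hflux := (hf.hasDerivAt.comp x hux).mul huxx
  -- As `u` is only `C²`, the differentiability of `ν u_xx` comes from the equation.
  have hvisc : (fun y ↦ ν * deriv (deriv (u t)) y) =ᶠ[𝓝 x]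
      (fun y ↦ deriv (fun s ↦ u s y) t) + (deriv f ∘ u t) * deriv (u t) :=
    hpde.mono fun y hy ↦ (sub_eq_zero.1 hy).symm
  have huxxx : ν * deriv (deriv (deriv (u t))) x = m
      + (deriv (deriv f) (u t x) * deriv (u t) x * deriv (u t) x
        + deriv f (u t x) * deriv (deriv (u t)) x) := by
    rw [← deriv_const_mul_field, hvisc.deriv_eq]
    exact (hmx.add hflux).deriv
  exact hmt.congr_deriv (by linear_combination -huxxx)

lemma exists_hasDerivAt_deriv_le_of_burgers {t x : ℝ} (hf : DifferentiableAt ℝ (deriv f) (u t x))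
    (hconv : σ ≤ deriv (deriv f) (u t x)) (hν : 0 ≤ ν) (hu : ContDiffAt ℝ 2 (uncurry u) (t, x))
    (hpde : ∀ᶠ y in 𝓝 x, deriv (fun s ↦ u s y) t + deriv f (u t y) * deriv (u t) y
      - ν * deriv (deriv (u t)) y = 0)
    (hmax : IsLocalMax (deriv (u t)) x) (hcont : ContinuousAt (deriv (u t)) x) :
    ∃ v' ≤ -(σ * deriv (u t) x ^ 2), HasDerivAt (fun s ↦ deriv (u s) x) v' t := by
  refine ⟨_, ?_, hasDerivAt_deriv_of_burgers hf hu hpde⟩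
  have hdiffusion : ν * deriv (deriv (deriv (u t))) x ≤ 0 :=
    mul_nonpos_of_nonneg_of_nonpos hν (deriv_deriv_nonpos_of_isLocalMax hmax hcont)
  have hsteepening : σ * deriv (u t) x ^ 2 ≤ deriv (deriv f) (u t x) * deriv (u t) x ^ 2 := by
    gcongr
  rw [hmax.deriv_eq_zero]
  linarith

theorem statement0_general {L M : ℝ} (hf : ContDiff ℝ 2 f) (hσ : 0 ≤ σ)
    (hconv : ∀ y, σ ≤ iteratedDeriv 2 f y) (hν : 0 ≤ ν) (hL : 0 < L)
    (hu : ContDiffOn ℝ 2 (uncurry u) (Ici 0 ×ˢ univ)) (hper : ∀ t, 0 ≤ t → Periodic (u t) L)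
    (hpde : ∀ t, 0 < t → ∀ x, deriv (fun s ↦ u s x) t + deriv f (u t x) * deriv (u t) x
      - ν * deriv (deriv (u t)) x = 0)
    (h0 : ∀ x, deriv (u 0) x ≤ M) {t : ℝ} (ht : 0 ≤ t) (x : ℝ) :
    deriv (u t) x ≤ M / (1 + σ * M * t) := by
  have hf' : Differentiable ℝ (deriv f) :=
    (contDiff_succ_iff_deriv (n := 1).1 hf).2.2.differentiable one_ne_zero
  have hv : ContinuousOn (fun p : ℝ × ℝ ↦ deriv (u p.1) p.2) (Ici 0 ×ˢ univ) :=
    continuousOn_deriv_uncurry (uniqueDiffOn_Ici 0) (hu.of_le one_le_two)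
  have hM : 0 ≤ M := by
    obtain ⟨c, -, hc⟩ := exists_deriv_eq_zero hL
      (contDiff_of_contDiffOn_uncurry hu self_mem_Ici).continuous.continuousOn
      (hper 0 le_rfl).eq.symm
    exact hc.ge.trans (h0 c)
  have hreduce : ∀ s, 0 ≤ s → ∀ y, ∃ z ∈ Icc 0 L, deriv (u s) y = deriv (u s) z := fun s hs y ↦
    let ⟨z, hz, hyz⟩ := (periodic_deriv (hper s hs)).exists_mem_Ico₀ hL y
    ⟨z, Ico_subset_Icc_self hz, hyz⟩
  obtain ⟨z, hz, hxz⟩ := hreduce t ht x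
  rw [hxz]
  refine le_div_of_hasDerivWithinAt_le_neg_mul_sq (w := fun s ↦ deriv (u s)) isCompact_Icc hσ hM
    (hv.mono (prod_mono Icc_subset_Ici_self (subset_univ _))) (fun y _ ↦ h0 y)
    (fun s hs y _ hmax ↦ ?_) (right_mem_Icc.2 ht) hz
  have hmax' : ∀ y', deriv (u s) y' ≤ deriv (u s) y := fun y' ↦
    let ⟨_, hz', hyz'⟩ := hreduce s hs.1.le y'
    hyz'.trans_le (hmax hz')
  have hcont : Continuous (deriv (u s)) :=
    (contDiff_of_contDiffOn_uncurry hu hs.1.le).continuous_deriv one_le_two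
  obtain ⟨v', hv', hd⟩ := exists_hasDerivAt_deriv_le_of_burgers (hf' _)
    (by simpa only [iteratedDeriv_succ, iteratedDeriv_zero] using hconv (u s y)) hν
    (hu.contDiffAt (prod_mem_nhds (Ici_mem_nhds hs.1) univ_mem))
    (Eventually.of_forall (hpde s hs.1)) (Eventually.of_forall hmax') hcont.continuousAt
  exact ⟨v', hv', hd.hasDerivWithinAt⟩

end Burgers

/-- For every `t > 0` and every `x ∈ S¹`, the space derivative of
the solution satisfies `u_x(t,x) ≤ min(D, σ⁻¹ t⁻¹)`. -/
theorem statement0 (f : ℝ → ℝ) (σ ν : ℝ) (u : ℝ → ℝ → ℝ)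
    (hsol : IsBurgersSolution f σ ν u) :
    ∀ t, 0 < t → ∀ x, deriv (u t) x ≤ min (burgersD u) (σ⁻¹ * t⁻¹) := by
  intro t ht x
  have hu : ContDiffOn ℝ 2 (uncurry u) (Ici 0 ×ˢ univ) := hsol.hu.of_le (by norm_cast)
  have hux0 : Continuous (deriv (u 0)) :=
    (contDiff_of_contDiffOn_uncurry hu self_mem_Ici).continuous_deriv one_le_two
  calc deriv (u t) x ≤ sobLp 1 ⊤ (u 0) / (1 + σ * sobLp 1 ⊤ (u 0) * t) :=
        statement0_general (hsol.hf.of_le (by norm_cast)) hsol.hσ.le hsol.hconv hsol.hν.le one_pos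
          hu (fun s _ ↦ hsol.hper s) hsol.hpde (deriv_le_sobLp_one_top hux0 (hsol.hper 0)) ht.le x
    _ ≤ min (sobLp 1 ⊤ (u 0)) (σ⁻¹ * t⁻¹) :=
        div_one_add_mul_le_min hsol.hσ ENNReal.toReal_nonneg ht
    _ ≤ min (burgersD u) (σ⁻¹ * t⁻¹) := min_le_min_right _ (le_max_right _ _)
end

section
/- Let f : ℝ → ℝ be C^∞, let m ≥ 1 be an integer, and let A > 0. There is a constant C̃ > 0, depending only on m, A and the C^{m+1}-norm of f on [−A,A], such that for every C^∞ zero-mean-value function v on S¹ with |v|_{L∞} ≤ A, one has |∫_{S¹} v^{(m)}(x) · (f(v))^{(m+1)}(x) dx| ≤ C̃ ‖v‖_m ‖v‖_{m+1}. -/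
open MeasureTheory Set
open scoped ENNReal

/-! Integrating by parts, the integral equals `-∫ v⁽ᵐ⁺¹⁾ (f ∘ v)⁽ᵐ⁾`, so by Cauchy–Schwarz it is
enough to have the Moser estimate `‖f ∘ v‖_m ≤ C ‖v‖_m`. Faà di Bruno's formula bounds `(f ∘ v)⁽ᵐ⁾`
pointwise by the sum of the `|v⁽ᵏ⁾| ^ (m / k)` over `1 ≤ k ≤ m`, and the `L²` norm of such a term is
`‖v⁽ᵏ⁾‖_{L^{2m/k}} ^ (m / k)`, which is bounded through the Gagliardo–Nirenberg inequality
`‖v⁽ᵏ⁾‖_{L^{2m/k}} ^ m ≤ C ‖v‖_{L^∞} ^ (m - k) ‖v‖_m ^ k`. The latter holds because the sequence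
`k ↦ ‖v⁽ᵏ⁾‖_{L^{2m/k}}` is log-convex up to constants: integrating `∫ |v⁽ᵏ⁺¹⁾| ^ p` by parts once
and applying Hölder's inequality bounds each term by its two neighbours. -/

lemma hasDerivAt_abs_rpow_mul_self {q : ℝ} (hq : 0 < q) (t : ℝ) :
    HasDerivAt (fun s : ℝ => |s| ^ q * s) ((q + 1) * |t| ^ q) t := by
  rcases eq_or_ne t 0 with rfl | ht
  · have hlim : Filter.Tendsto (fun s : ℝ => |s| ^ q) (nhdsWithin 0 {0}ᶜ) (nhds 0) := by
      have hcont : Continuous fun s : ℝ => |s| ^ q :=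
        continuous_abs.rpow_const fun _ => Or.inr hq.le
      simpa only [abs_zero, Real.zero_rpow hq.ne'] using
        (hcont.tendsto 0).mono_left nhdsWithin_le_nhds
    rw [hasDerivAt_iff_tendsto_slope, abs_zero, Real.zero_rpow hq.ne', mul_zero]
    refine hlim.congr' ?_
    filter_upwards [self_mem_nhdsWithin] with s (hs : s ≠ 0)
    simp [slope_def_field, hs]
  · have hpos : 0 < |t| := abs_pos.mpr ht
    refine (((hasDerivAt_abs ht).rpow_const (p := q) (Or.inl hpos.ne')).mul
      (hasDerivAt_id t)).congr_deriv ?_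
    have hsign : (SignType.sign t : ℝ) * t = |t| := sign_mul_self t
    have hpow : |t| ^ q = |t| ^ (q - 1) * |t| := by
      rw [← Real.rpow_add_one hpos.ne', sub_add_cancel]
    simp only [id, mul_one]
    linear_combination q * |t| ^ (q - 1) * hsign - q * hpow

section Holder

variable {α : Type*} {mα : MeasurableSpace α} {μ : Measure α} {f g h : α → ℝ} {p q r s : ℝ≥0∞}

lemma lpNorm_mul_le [ENNReal.HolderTriple p q r] (hf : MemLp f p μ) (hg : MemLp g q μ) :
    lpNorm (f * g) r μ ≤ lpNorm f p μ * lpNorm g q μ := by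
  rw [← toReal_eLpNorm (hf.1.mul hg.1), ← toReal_eLpNorm hf.1, ← toReal_eLpNorm hg.1,
    ← ENNReal.toReal_mul]
  exact ENNReal.toReal_mono (ENNReal.mul_ne_top hf.eLpNorm_ne_top hg.eLpNorm_ne_top)
    (eLpNorm_smul_le_mul_eLpNorm (r := r) (f := g) (φ := f) hg.1 hf.1)

lemma lpNorm_abs_rpow (hf : AEStronglyMeasurable f μ) {θ : ℝ} (hθ : 0 < θ) (p : ℝ≥0∞) :
    lpNorm (fun x => |f x| ^ θ) p μ = lpNorm f (p * ENNReal.ofReal θ) μ ^ θ := by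
  have hfθ : AEStronglyMeasurable (fun x => |f x| ^ θ) μ :=
    (hf.aemeasurable.abs.pow_const θ).aestronglyMeasurable
  rw [← toReal_eLpNorm hfθ, ← toReal_eLpNorm hf, ENNReal.toReal_rpow,
    ← eLpNorm_norm_rpow f hθ]
  simp only [Real.norm_eq_abs]

lemma integral_abs_mul_le_lpNorm_mul_lpNorm [ENNReal.HolderTriple p q 1]
    (hf : MemLp f p μ) (hg : MemLp g q μ) :
    ∫ x, |f x * g x| ∂μ ≤ lpNorm f p μ * lpNorm g q μ :=
  (lpNorm_one_eq_integral_norm (hf.1.mul hg.1)).symm.trans_le (lpNorm_mul_le hf hg)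

lemma integral_abs_mul_mul_rpow_le [ENNReal.HolderTriple r s (p / 2)] (hp : 2 < p) (hp' : p ≠ ⊤)
    (hf : MemLp f r μ) (hh : MemLp h s μ) (hg : MemLp g p μ) :
    ∫ x, |f x * h x * |g x| ^ (p.toReal - 2)| ∂μ ≤
      lpNorm f r μ * lpNorm h s μ * lpNorm g p μ ^ (p.toReal - 2) := by
  have hp0 : p ≠ 0 := (zero_lt_two.trans hp).ne'
  have hq0 : p - 2 ≠ 0 := (tsub_pos_of_lt hp).ne'
  have hqtop : p - 2 ≠ ⊤ := ENNReal.sub_ne_top hp'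
  have hq : p.toReal - 2 = (p - 2).toReal := by
    rw [ENNReal.toReal_sub_of_le hp.le hp', ENNReal.toReal_ofNat]
  have : ENNReal.HolderTriple (p / 2) (p / (p - 2)) 1 := ⟨by
    rw [ENNReal.inv_div (by simp) (by simp), ENNReal.inv_div (.inl hqtop) (.inl hq0),
      ENNReal.div_add_div_same, add_tsub_cancel_of_le hp.le, ENNReal.div_self hp0 hp', inv_one]⟩
  have hexp : p / (p - 2) * ENNReal.ofReal (p - 2).toReal = p := by
    rw [ENNReal.ofReal_toReal hqtop, ENNReal.div_mul_cancel hq0 hqtop]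
  have hgq : MemLp (fun x => |g x| ^ (p - 2).toReal) (p / (p - 2)) μ :=
    hg.norm_rpow_div (p - 2)
  rw [hq]
  calc ∫ x, |f x * h x * |g x| ^ (p - 2).toReal| ∂μ
      ≤ lpNorm (f * h) (p / 2) μ * lpNorm (fun x => |g x| ^ (p - 2).toReal) (p / (p - 2)) μ :=
        integral_abs_mul_le_lpNorm_mul_lpNorm (hh.mul hf) hgq
    _ ≤ lpNorm f r μ * lpNorm h s μ * lpNorm g p μ ^ (p - 2).toReal := by
        rw [lpNorm_abs_rpow hg.1 (ENNReal.toReal_pos hq0 hqtop), hexp]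
        gcongr
        · exact Real.rpow_nonneg lpNorm_nonneg _
        · exact lpNorm_mul_le hf hh

end Holder

lemma memLp_restrict_Ioc {g : ℝ → ℝ} (hg : Continuous g) (a b : ℝ) (p : ℝ≥0∞) :
    MemLp g p (volume.restrict (Ioc a b)) := by
  obtain ⟨C, hC⟩ := isCompact_Icc.exists_bound_of_continuousOn (hg.continuousOn (s := Icc a b))
  refine MemLp.of_bound hg.aestronglyMeasurable C ?_
  filter_upwards [ae_restrict_mem measurableSet_Ioc] with x hx
  exact hC x (Ioc_subset_Icc_self hx)

section Interpolation

variable {a b : ℝ} {w : ℝ → ℝ}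

/- Integrate by parts, moving one derivative off `|w'| ^ p = (|w'| ^ (p - 2) * w') * w'`. -/
lemma integral_abs_deriv_rpow_le (hab : a ≤ b) (hw : ContDiff ℝ 2 w) (hwab : w a = w b)
    (hdab : deriv w a = deriv w b) {p : ℝ} (hp : 2 < p) :
    ∫ x in Ioc a b, |deriv w x| ^ p ≤
      (p - 1) * ∫ x in Ioc a b, |w x * deriv (deriv w) x * |deriv w x| ^ (p - 2)| := by
  have hdw : ContDiff ℝ 1 (deriv w) := hw.deriv'
  have hd2 : Continuous (deriv (deriv w)) := hdw.continuous_deriv le_rfl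
  have hq : Continuous fun x => |deriv w x| ^ (p - 2) :=
    hdw.continuous.abs.rpow_const fun _ => Or.inr (by linarith)
  have hparts : ∫ x in Ioc a b, |deriv w x| ^ p =
      ∫ x in Ioc a b, -((p - 1) * (w x * deriv (deriv w) x * |deriv w x| ^ (p - 2))) := by
    have hpow : ∀ x, |deriv w x| ^ p = |deriv w x| ^ (p - 2) * deriv w x * deriv w x := fun x => by
      rw [mul_assoc, ← abs_mul_abs_self, ← sq, ← Real.rpow_two,
        ← Real.rpow_add_of_nonneg (abs_nonneg _) (by linarith) zero_le_two, sub_add_cancel]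
    have hibp := intervalIntegral.integral_mul_deriv_eq_deriv_mul (a := a) (b := b)
      (fun x _ => (hasDerivAt_abs_rpow_mul_self (sub_pos.2 hp) (deriv w x)).comp x
        (hdw.differentiable one_ne_zero x).hasDerivAt)
      (fun x _ => (hw.differentiable two_ne_zero x).hasDerivAt)
      (((continuous_const.mul hq).mul hd2).intervalIntegrable _ _)
      (hdw.continuous.intervalIntegrable _ _)
    simp only [Function.comp_apply, hwab, hdab, sub_self, zero_sub,
      intervalIntegral.integral_of_le hab, ← integral_neg] at hibp
    simp only [hpow, hibp]
    congr 1 with x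
    ring
  rw [hparts, integral_neg, integral_const_mul, ← mul_neg]
  gcongr
  · linarith
  · exact (neg_le_abs _).trans abs_integral_le_integral_abs

lemma lpNorm_deriv_sq_le (hab : a ≤ b) (hw : ContDiff ℝ 2 w) (hwab : w a = w b)
    (hdab : deriv w a = deriv w b) {p r s : ℝ≥0∞} [ENNReal.HolderTriple r s (p / 2)]
    (hp : 2 < p) (hp' : p ≠ ⊤) :
    lpNorm (deriv w) p (volume.restrict (Ioc a b)) ^ 2 ≤
      (p.toReal - 1) * (lpNorm w r (volume.restrict (Ioc a b)) *
        lpNorm (deriv (deriv w)) s (volume.restrict (Ioc a b))) := by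
  set μ := volume.restrict (Ioc a b)
  have hdw : ContDiff ℝ 1 (deriv w) := hw.deriv'
  have hd2 : Continuous (deriv (deriv w)) := hdw.continuous_deriv le_rfl
  have hp2 : 2 < p.toReal := (ENNReal.toReal_lt_toReal (by simp) hp').2 hp
  set N := lpNorm (deriv w) p μ with hN
  have hpow : N ^ p.toReal = ∫ x, |deriv w x| ^ p.toReal ∂μ := by
    rw [hN, lpNorm_eq_integral_norm_rpow_toReal (zero_lt_two.trans hp).ne' hp'
      hdw.continuous.aestronglyMeasurable, Real.rpow_inv_rpow (by positivity) (by linarith)]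
    simp only [Real.norm_eq_abs]
  have hmain : N ^ 2 * N ^ (p.toReal - 2) ≤ (p.toReal - 1) *
      (lpNorm w r μ * lpNorm (deriv (deriv w)) s μ) * N ^ (p.toReal - 2) := by
    calc N ^ 2 * N ^ (p.toReal - 2) = ∫ x, |deriv w x| ^ p.toReal ∂μ := by
          rw [← hpow, ← Real.rpow_two, ← Real.rpow_add_of_nonneg lpNorm_nonneg zero_le_two
            (by linarith), add_sub_cancel]
      _ ≤ (p.toReal - 1) * ∫ x, |w x * deriv (deriv w) x * |deriv w x| ^ (p.toReal - 2)| ∂μ :=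
          integral_abs_deriv_rpow_le hab hw hwab hdab hp2
      _ ≤ (p.toReal - 1) * (lpNorm w r μ * lpNorm (deriv (deriv w)) s μ *
            N ^ (p.toReal - 2)) := by
          gcongr
          · linarith
          · exact integral_abs_mul_mul_rpow_le hp hp' (memLp_restrict_Ioc hw.continuous a b r)
              (memLp_restrict_Ioc hd2 a b s) (memLp_restrict_Ioc hdw.continuous a b p)
      _ = _ := (mul_assoc _ _ _).symm
  have hN0 : 0 ≤ N := lpNorm_nonneg
  rcases hN0.eq_or_lt with h0 | hpos
  · rw [← h0, sq, zero_mul]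
    exact mul_nonneg (by linarith) (mul_nonneg lpNorm_nonneg lpNorm_nonneg)
  · exact le_of_mul_le_mul_right hmain (Real.rpow_pos_of_pos hpos _)

end Interpolation

section LogConvex

variable {N : ℕ → ℝ} {m k : ℕ}

lemma pow_succ_succ_le_mul_pow_succ {x y z C : ℝ} {n : ℕ} (hy : 0 ≤ y) (hz : 0 ≤ z) (hC : 0 ≤ C)
    (hsq : y ^ 2 ≤ x * z) (hpow : x ^ (n + 1) ≤ C * y ^ n) :
    y ^ (n + 2) ≤ C * z ^ (n + 1) := by
  rcases hy.eq_or_lt with rfl | hy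
  · rw [zero_pow (by lia)]
    positivity
  refine le_of_mul_le_mul_left ?_ (pow_pos hy n)
  calc y ^ n * y ^ (n + 2) = (y ^ 2) ^ (n + 1) := by ring
    _ ≤ (x * z) ^ (n + 1) := by gcongr
    _ = x ^ (n + 1) * z ^ (n + 1) := mul_pow _ _ _
    _ ≤ C * y ^ n * z ^ (n + 1) := by gcongr
    _ = y ^ n * (C * z ^ (n + 1)) := by ring

lemma pow_le_mul_pow_of_sq_le_mul (hN : ∀ k, 0 ≤ N k)
    (hconv : ∀ k, k + 2 ≤ m → N (k + 1) ^ 2 ≤ N k * N (k + 2)) (hk : k ≤ m) :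
    N k ^ m ≤ N 0 ^ (m - k) * N m ^ k := by
  induction m generalizing k with
  | zero => simp [Nat.le_zero.mp hk]
  | succ m ih =>
    have ih {k : ℕ} (hk : k ≤ m) : N k ^ m ≤ N 0 ^ (m - k) * N m ^ k :=
      ih (fun k hk => hconv k (by lia)) hk
    have hlast : N m ^ (m + 1) ≤ N 0 * N (m + 1) ^ m := by
      rcases m with _ | n
      · simp
      exact pow_succ_succ_le_mul_pow_succ (hN _) (hN _) (hN 0) (hconv n le_rfl)
        (by simpa using ih n.le_succ)
    rcases hk.eq_or_lt with rfl | hk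
    · simp
    obtain ⟨e, rfl⟩ := Nat.exists_eq_add_of_le (Nat.lt_succ_iff.mp hk)
    rcases Nat.eq_zero_or_pos (k + e) with h0 | hpos
    · simp [show k = 0 by lia, show e = 0 by lia]
    have hsub : k + e + 1 - k = e + 1 := by lia
    have := hN 0
    have := hN k
    have := hN (k + e + 1)
    refine le_of_pow_le_pow_left₀ hpos.ne' (by positivity) ?_
    calc (N k ^ (k + e + 1)) ^ (k + e) = (N k ^ (k + e)) ^ (k + e + 1) := pow_right_comm _ _ _
      _ ≤ (N 0 ^ e * N (k + e) ^ k) ^ (k + e + 1) := by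
          gcongr
          simpa using ih (Nat.le_add_right k e)
      _ = N 0 ^ (e * (k + e + 1)) * (N (k + e) ^ (k + e + 1)) ^ k := by ring
      _ ≤ N 0 ^ (e * (k + e + 1)) * (N 0 * N (k + e + 1) ^ (k + e)) ^ k := by
          gcongr
          exact pow_nonneg (hN _) _
      _ = (N 0 ^ (k + e + 1 - k) * N (k + e + 1) ^ k) ^ (k + e) := by rw [hsub]; ring

/- The factor `d ^ 2` is absorbed by passing to the sequence `d ^ (k ^ 2) * N k`. -/
lemma pow_le_mul_pow_of_sq_le_sq_mul {d : ℝ} (hd : 0 < d) (hN : ∀ k, 0 ≤ N k)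
    (hconv : ∀ k, k + 2 ≤ m → N (k + 1) ^ 2 ≤ d ^ 2 * (N k * N (k + 2))) (hk : k ≤ m) :
    N k ^ m ≤ d ^ (k * m * (m - k)) * (N 0 ^ (m - k) * N m ^ k) := by
  have hscaled := pow_le_mul_pow_of_sq_le_mul (N := fun k => d ^ (k ^ 2) * N k)
    (fun k => mul_nonneg (by positivity) (hN k))
    (fun k hk => by
      calc (d ^ ((k + 1) ^ 2) * N (k + 1)) ^ 2 = d ^ (2 * (k + 1) ^ 2) * N (k + 1) ^ 2 := by ring
        _ ≤ d ^ (2 * (k + 1) ^ 2) * (d ^ 2 * (N k * N (k + 2))) := by gcongr; exact hconv k hk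
        _ = d ^ (k ^ 2) * N k * (d ^ ((k + 2) ^ 2) * N (k + 2)) := by ring)
    hk
  obtain ⟨e, rfl⟩ := Nat.exists_eq_add_of_le hk
  rw [Nat.add_sub_cancel_left] at hscaled ⊢
  refine le_of_mul_le_mul_left ?_ (show 0 < d ^ (k ^ 2 * (k + e)) by positivity)
  calc d ^ (k ^ 2 * (k + e)) * N k ^ (k + e) = (d ^ k ^ 2 * N k) ^ (k + e) := by ring
    _ ≤ (d ^ 0 ^ 2 * N 0) ^ e * (d ^ (k + e) ^ 2 * N (k + e)) ^ k := hscaled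
    _ = d ^ (k ^ 2 * (k + e)) * (d ^ (k * (k + e) * e) * (N 0 ^ e * N (k + e) ^ k)) := by ring

end LogConvex

lemma periodic_iteratedDeriv {v : ℝ → ℝ} {c : ℝ} (hv : Function.Periodic v c) (k : ℕ) :
    Function.Periodic (iteratedDeriv k v) c := fun x => by
  rw [← congrFun (iteratedDeriv_comp_add_const k v c) x, hv.funext]

section SobolevNorm

variable {f g v : ℝ → ℝ} {m k : ℕ} {A B : ℝ}

lemma sobLp_nonneg (k : ℕ) (p : ℝ≥0∞) (v : ℝ → ℝ) : 0 ≤ sobLp k p v :=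
  ENNReal.toReal_nonneg

lemma sobLp_eq_lpNorm (hv : ContDiff ℝ k v) (p : ℝ≥0∞) :
    sobLp k p v = lpNorm (iteratedDeriv k v) p (volume.restrict (Ioc (0 : ℝ) 1)) :=
  toReal_eLpNorm (hv.continuous_iteratedDeriv k le_rfl).aestronglyMeasurable

lemma sobLp_zero_top_le (hA : ∀ x, |v x| ≤ A) : sobLp 0 ⊤ v ≤ A := by
  rw [sobLp, iteratedDeriv_zero, eLpNorm_exponent_top]
  exact ENNReal.toReal_le_of_le_ofReal ((abs_nonneg _).trans (hA 0))
    (eLpNormEssSup_le_of_ae_bound (.of_forall hA))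

lemma sobLp_succ_sq_le (hv : ContDiff ℝ (k + 2) v) (hper : Function.Periodic v 1)
    {p r s : ℝ≥0∞} [ENNReal.HolderTriple r s (p / 2)] (hp : 2 < p) (hp' : p ≠ ⊤) :
    sobLp (k + 1) p v ^ 2 ≤ (p.toReal - 1) * (sobLp k r v * sobLp (k + 2) s v) := by
  have hw : ContDiff ℝ 2 (iteratedDeriv k v) := by
    rw [iteratedDeriv_eq_iterate]
    exact ContDiff.iterate_deriv' 2 k (hv.of_le (by norm_cast; lia))
  have hperiod (j : ℕ) : iteratedDeriv j v 0 = iteratedDeriv j v 1 := by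
    simpa using (periodic_iteratedDeriv hper j 0).symm
  rw [sobLp_eq_lpNorm (hv.of_le (by norm_cast; lia)),
    sobLp_eq_lpNorm (hv.of_le (by norm_cast; lia)), sobLp_eq_lpNorm (hv.of_le (by norm_cast)),
    iteratedDeriv_succ (n := k + 1), iteratedDeriv_succ (n := k)]
  refine lpNorm_deriv_sq_le zero_le_one hw (hperiod k) ?_ hp hp'
  simpa only [iteratedDeriv_succ] using hperiod (k + 1)

lemma holderTriple_two_mul_div (hm : m ≠ 0) :
    ENNReal.HolderTriple (2 * m / k) (2 * m / (k + 2 : ℕ)) (2 * m / (k + 1 : ℕ) / 2) := ⟨by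
  have hm0 : (2 * m : ℝ≥0∞) ≠ 0 := by simpa using hm
  rw [ENNReal.inv_div (by simp) (.inr hm0), ENNReal.inv_div (by simp) (.inr hm0),
    ENNReal.inv_div (by simp) (by simp), ENNReal.div_add_div_same, div_eq_mul_inv 2,
    ENNReal.inv_div (by simp) (.inr hm0), ← mul_div_assoc]
  congr 1
  push_cast
  ring⟩

lemma sobLp_succ_sq_le_of_add_two_le (hkm : k + 2 ≤ m) (hv : ContDiff ℝ m v)
    (hper : Function.Periodic v 1) :
    sobLp (k + 1) (2 * m / (k + 1 : ℕ)) v ^ 2 ≤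
      (2 * m) ^ 2 * (sobLp k (2 * m / k) v * sobLp (k + 2) (2 * m / (k + 2 : ℕ)) v) := by
  have hmtop : (2 * m : ℝ≥0∞) ≠ ⊤ := ENNReal.mul_ne_top (by simp) (ENNReal.natCast_ne_top m)
  have hp : (2 : ℝ≥0∞) < 2 * m / (k + 1 : ℕ) := by
    rw [ENNReal.lt_div_iff_mul_lt (by simp) (by simp)]
    exact_mod_cast (by lia : 2 * (k + 1) < 2 * m)
  have hconst : (2 * m / (k + 1 : ℕ) : ℝ≥0∞).toReal - 1 ≤ (2 * m) ^ 2 := by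
    have hm1 : (1 : ℝ) ≤ m := by exact_mod_cast (by lia : 1 ≤ m)
    have hle : (2 * m / (k + 1 : ℕ) : ℝ) ≤ 2 * m :=
      div_le_self (by positivity) (by exact_mod_cast k.succ_pos)
    simp only [ENNReal.toReal_div, ENNReal.toReal_mul, ENNReal.toReal_ofNat, ENNReal.toReal_natCast]
    nlinarith
  have := holderTriple_two_mul_div (k := k) (by lia : m ≠ 0)
  refine (sobLp_succ_sq_le (r := 2 * m / k) (s := 2 * m / (k + 2 : ℕ))
    (hv.of_le (by exact_mod_cast hkm)) hper hp (ENNReal.div_ne_top hmtop (by simp))).trans ?_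
  gcongr
  exact mul_nonneg (sobLp_nonneg _ _ _) (sobLp_nonneg _ _ _)

/- At `k = 0` the exponent `2 * m / k` is `⊤`, so the interpolation chain starts at the sup norm. -/
theorem sobLp_pow_le_gagliardo_nirenberg (hm : m ≠ 0) (hv : ContDiff ℝ m v)
    (hper : Function.Periodic v 1) (hk : k ≤ m) :
    sobLp k (2 * m / k) v ^ m ≤
      (2 * m) ^ (k * m * (m - k)) * (sobLp 0 ⊤ v ^ (m - k) * sobLp m 2 v ^ k) := by
  have hzero : (2 * m / (0 : ℕ) : ℝ≥0∞) = ⊤ := by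
    rw [Nat.cast_zero, ENNReal.div_zero (by simpa using hm)]
  have hself : (2 * m / m : ℝ≥0∞) = 2 :=
    ENNReal.mul_div_cancel_right (by simpa using hm) (ENNReal.natCast_ne_top m)
  simpa only [hzero, hself] using
    pow_le_mul_pow_of_sq_le_sq_mul (N := fun j => sobLp j (2 * m / j) v)
      (by positivity : (0 : ℝ) < 2 * m) (fun j => sobLp_nonneg _ _ _)
      (fun j hj => sobLp_succ_sq_le_of_add_two_le hj hv hper) hk

/-- The constant of the Moser estimate `‖f ∘ v‖_m ≤ moserConst m A * B * ‖v‖_m`, valid when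
`|v| ≤ A` and the derivatives of `f` of order at most `m` are bounded by `B` on `[-A, A]`. The
factor `m!` comes from Faà di Bruno's formula and the `k`-th summand from the Gagliardo–Nirenberg
inequality for the `k`-th derivative. -/
noncomputable def moserConst (m : ℕ) (A : ℝ) : ℝ :=
  m.factorial * ∑ k ∈ Finset.Icc 1 m, ((2 * m) ^ (k * m * (m - k)) * A ^ (m - k)) ^ (k⁻¹ : ℝ)

lemma moserConst_pos (hm : 1 ≤ m) (hA : 0 < A) : 0 < moserConst m A :=
  mul_pos (by positivity) (Finset.sum_pos (fun k _ => by positivity) (Finset.nonempty_Icc.2 hm))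

lemma sobLp_rpow_le (hv : ContDiff ℝ m v) (hper : Function.Periodic v 1) (hA : ∀ x, |v x| ≤ A)
    (hk : k ≠ 0) (hkm : k ≤ m) :
    sobLp k (2 * m / k) v ^ (m / k : ℝ) ≤
      ((2 * m) ^ (k * m * (m - k)) * A ^ (m - k)) ^ (k⁻¹ : ℝ) * sobLp m 2 v := by
  have hA0 : 0 ≤ A := (abs_nonneg _).trans (hA 0)
  have hm : m ≠ 0 := by lia
  have hNk := sobLp_nonneg k (2 * m / k) v
  have hNm := sobLp_nonneg m 2 v
  have hN0 := sobLp_nonneg 0 ⊤ v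
  calc sobLp k (2 * m / k) v ^ (m / k : ℝ) = (sobLp k (2 * m / k) v ^ m) ^ (k⁻¹ : ℝ) := by
        rw [div_eq_mul_inv (m : ℝ), Real.rpow_mul hNk, Real.rpow_natCast]
    _ ≤ ((2 * m) ^ (k * m * (m - k)) * (sobLp 0 ⊤ v ^ (m - k) * sobLp m 2 v ^ k)) ^ (k⁻¹ : ℝ) := by
        gcongr
        exact sobLp_pow_le_gagliardo_nirenberg hm hv hper hkm
    _ ≤ ((2 * m) ^ (k * m * (m - k)) * (A ^ (m - k) * sobLp m 2 v ^ k)) ^ (k⁻¹ : ℝ) := by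
        gcongr
        exact sobLp_zero_top_le hA
    _ = _ := by
        rw [← mul_assoc, Real.mul_rpow (by positivity) (by positivity),
          Real.pow_rpow_inv_natCast hNm hk]

/- Faà di Bruno with every `|iteratedDeriv k v x| ^ (m / k)` majorised by their sum. -/
lemma abs_iteratedDeriv_comp_le (hm : m ≠ 0) (hf : ContDiff ℝ m f) (hv : ContDiff ℝ m v) {x : ℝ}
    (hB : ∀ k ≤ m, |iteratedDeriv k f (v x)| ≤ B) :
    |iteratedDeriv m (f ∘ v) x| ≤
      m.factorial * B * ∑ k ∈ Finset.Icc 1 m, |iteratedDeriv k v x| ^ (m / k : ℝ) := by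
  set S := ∑ k ∈ Finset.Icc 1 m, |iteratedDeriv k v x| ^ (m / k : ℝ)
  have hS0 : 0 ≤ S := Finset.sum_nonneg fun k _ => by positivity
  have hle (k : ℕ) (hk : 1 ≤ k) (hkm : k ≤ m) :
      |iteratedDeriv k v x| ≤ (S ^ (m⁻¹ : ℝ)) ^ k := by
    have hterm : |iteratedDeriv k v x| ^ (m / k : ℝ) ≤ S :=
      Finset.single_le_sum (f := fun k : ℕ => |iteratedDeriv k v x| ^ (m / k : ℝ))
        (fun k _ => by positivity) (Finset.mem_Icc.2 ⟨hk, hkm⟩)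
    have hmk : (m / k : ℝ) ≠ 0 := by positivity
    calc |iteratedDeriv k v x| = (|iteratedDeriv k v x| ^ (m / k : ℝ)) ^ (m / k : ℝ)⁻¹ :=
          (Real.rpow_rpow_inv (abs_nonneg _) hmk).symm
      _ ≤ S ^ (m / k : ℝ)⁻¹ := by gcongr
      _ = (S ^ (m⁻¹ : ℝ)) ^ k := by
          rw [inv_div, div_eq_inv_mul, Real.rpow_mul hS0, Real.rpow_natCast]
  have hcomp := norm_iteratedFDeriv_comp_le hf hv le_rfl x (C := B) (D := S ^ (m⁻¹ : ℝ))
    (by simpa only [norm_iteratedFDeriv_eq_norm_iteratedDeriv, Real.norm_eq_abs] using hB)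
    (by simpa only [norm_iteratedFDeriv_eq_norm_iteratedDeriv, Real.norm_eq_abs] using hle)
  rwa [norm_iteratedFDeriv_eq_norm_iteratedDeriv, Real.norm_eq_abs,
    Real.rpow_inv_natCast_pow hS0 hm] at hcomp

lemma sobLp_comp_le_sum (hm : m ≠ 0) (hf : ContDiff ℝ m f) (hv : ContDiff ℝ m v)
    (hB : ∀ k ≤ m, ∀ x, |iteratedDeriv k f (v x)| ≤ B) :
    sobLp m 2 (f ∘ v) ≤
      m.factorial * B * ∑ k ∈ Finset.Icc 1 m, sobLp k (2 * m / k) v ^ (m / k : ℝ) := by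
  set μ := volume.restrict (Ioc (0 : ℝ) 1)
  have hB0 : 0 ≤ B := (abs_nonneg _).trans (hB 0 m.zero_le 0)
  have hcont (k : ℕ) (hk : k ∈ Finset.Icc 1 m) : Continuous (iteratedDeriv k v) :=
    hv.continuous_iteratedDeriv k (by exact_mod_cast (Finset.mem_Icc.1 hk).2)
  have hmem (k : ℕ) (hk : k ∈ Finset.Icc 1 m) :
      MemLp (fun x => |iteratedDeriv k v x| ^ (m / k : ℝ)) 2 μ :=
    memLp_restrict_Ioc ((hcont k hk).abs.rpow_const fun _ => Or.inr (by positivity)) 0 1 2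
  have hnorm (k : ℕ) (hk : k ∈ Finset.Icc 1 m) :
      lpNorm (fun x => |iteratedDeriv k v x| ^ (m / k : ℝ)) 2 μ =
        sobLp k (2 * m / k) v ^ (m / k : ℝ) := by
    obtain ⟨hk1, hkm⟩ := Finset.mem_Icc.1 hk
    have hk0 : (0 : ℝ) < k := by exact_mod_cast hk1
    rw [sobLp_eq_lpNorm (hv.of_le (by exact_mod_cast hkm)),
      lpNorm_abs_rpow (hcont k hk).aestronglyMeasurable (by positivity),
      ENNReal.ofReal_div_of_pos hk0, ENNReal.ofReal_natCast, ENNReal.ofReal_natCast, mul_div_assoc]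
  rw [sobLp_eq_lpNorm (hf.comp hv)]
  calc lpNorm (iteratedDeriv m (f ∘ v)) 2 μ
      ≤ lpNorm ((m.factorial * B) •
          ∑ k ∈ Finset.Icc 1 m, fun x => |iteratedDeriv k v x| ^ (m / k : ℝ)) 2 μ := by
        refine lpNorm_mono_real ((memLp_finsetSum' _ hmem).const_smul _) fun x => ?_
        simpa only [Real.norm_eq_abs, Pi.smul_apply, Finset.sum_apply, smul_eq_mul] using
          abs_iteratedDeriv_comp_le hm hf hv fun k hk => hB k hk x
    _ = m.factorial * B *
          lpNorm (∑ k ∈ Finset.Icc 1 m, fun x => |iteratedDeriv k v x| ^ (m / k : ℝ)) 2 μ := by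
        rw [lpNorm_const_smul, coe_nnnorm, Real.norm_of_nonneg (by positivity)]
    _ ≤ m.factorial * B *
          ∑ k ∈ Finset.Icc 1 m, lpNorm (fun x => |iteratedDeriv k v x| ^ (m / k : ℝ)) 2 μ := by
        gcongr
        exact lpNorm_sum_le hmem one_le_two
    _ = _ := by rw [Finset.sum_congr rfl hnorm]

theorem sobLp_comp_le (hm : m ≠ 0) (hf : ContDiff ℝ m f)
    (hB : ∀ k ≤ m, ∀ y ∈ Icc (-A) A, |iteratedDeriv k f y| ≤ B) (hv : ContDiff ℝ m v)
    (hper : Function.Periodic v 1) (hA : ∀ x, |v x| ≤ A) :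
    sobLp m 2 (f ∘ v) ≤ moserConst m A * B * sobLp m 2 v := by
  have hBv (k : ℕ) (hk : k ≤ m) (x : ℝ) : |iteratedDeriv k f (v x)| ≤ B :=
    hB k hk (v x) (abs_le.1 (hA x))
  have hB0 : 0 ≤ B := (abs_nonneg _).trans (hBv 0 m.zero_le 0)
  calc sobLp m 2 (f ∘ v)
      ≤ m.factorial * B * ∑ k ∈ Finset.Icc 1 m, sobLp k (2 * m / k) v ^ (m / k : ℝ) :=
        sobLp_comp_le_sum hm hf hv hBv
    _ ≤ m.factorial * B * ∑ k ∈ Finset.Icc 1 m,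
          ((2 * m) ^ (k * m * (m - k)) * A ^ (m - k)) ^ (k⁻¹ : ℝ) * sobLp m 2 v := by
        gcongr with k hk
        obtain ⟨hk1, hkm⟩ := Finset.mem_Icc.1 hk
        exact sobLp_rpow_le hv hper hA (Nat.one_le_iff_ne_zero.1 hk1) hkm
    _ = moserConst m A * B * sobLp m 2 v := by
        rw [moserConst, ← Finset.sum_mul]
        ring

lemma abs_integral_iteratedDeriv_mul_le (hv : ContDiff ℝ (m + 1) v) (hg : ContDiff ℝ (m + 1) g)
    (hvper : Function.Periodic v 1) (hgper : Function.Periodic g 1) :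
    |∫ x in Ioc (0 : ℝ) 1, iteratedDeriv m v x * iteratedDeriv (m + 1) g x| ≤
      sobLp (m + 1) 2 v * sobLp m 2 g := by
  have hderiv {u : ℝ → ℝ} (hu : ContDiff ℝ (m + 1) u) (x : ℝ) :
      HasDerivAt (iteratedDeriv m u) (iteratedDeriv (m + 1) u x) x := by
    rw [iteratedDeriv_succ]
    exact (hu.differentiable_iteratedDeriv m (by norm_cast; lia) x).hasDerivAt
  have hcont {u : ℝ → ℝ} (hu : ContDiff ℝ (m + 1) u) : Continuous (iteratedDeriv (m + 1) u) :=
    hu.continuous_iteratedDeriv _ le_rfl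
  have hcont' {u : ℝ → ℝ} (hu : ContDiff ℝ (m + 1) u) : Continuous (iteratedDeriv m u) :=
    hu.continuous_iteratedDeriv m (by norm_cast; lia)
  have hperiod {u : ℝ → ℝ} (hu : Function.Periodic u 1) :
      iteratedDeriv m u 1 = iteratedDeriv m u 0 := by
    simpa using periodic_iteratedDeriv hu m 0
  have hparts := intervalIntegral.integral_mul_deriv_eq_deriv_mul (a := 0) (b := 1)
    (fun x _ => hderiv hv x) (fun x _ => hderiv hg x)
    ((hcont hv).intervalIntegrable _ _) ((hcont hg).intervalIntegrable _ _)
  rw [hperiod hvper, hperiod hgper, sub_self, zero_sub,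
    intervalIntegral.integral_of_le zero_le_one, intervalIntegral.integral_of_le zero_le_one]
    at hparts
  rw [hparts, abs_neg, sobLp_eq_lpNorm hv, sobLp_eq_lpNorm (hg.of_le (by norm_cast; lia))]
  exact abs_integral_le_integral_abs.trans (integral_abs_mul_le_lpNorm_mul_lpNorm
    (memLp_restrict_Ioc (hcont hv) 0 1 2) (memLp_restrict_Ioc (hcont' hg) 0 1 2))

end SobolevNorm

theorem statement3_general {m : ℕ} (hm : m ≠ 0) {A B : ℝ} {f v : ℝ → ℝ}
    (hf : ContDiff ℝ (m + 1) f) (hB : ∀ k ≤ m, ∀ y ∈ Icc (-A) A, |iteratedDeriv k f y| ≤ B)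
    (hv : ContDiff ℝ (m + 1) v) (hper : Function.Periodic v 1) (hA : ∀ x, |v x| ≤ A) :
    |∫ x in Ioc (0 : ℝ) 1, iteratedDeriv m v x * iteratedDeriv (m + 1) (f ∘ v) x| ≤
      moserConst m A * B * sobLp m 2 v * sobLp (m + 1) 2 v := by
  have hmle : (m : WithTop ℕ∞) ≤ m + 1 := by norm_cast; lia
  calc |∫ x in Ioc (0 : ℝ) 1, iteratedDeriv m v x * iteratedDeriv (m + 1) (f ∘ v) x|
      ≤ sobLp (m + 1) 2 v * sobLp m 2 (f ∘ v) :=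
        abs_integral_iteratedDeriv_mul_le hv (hf.comp hv) hper (hper.comp f)
    _ ≤ sobLp (m + 1) 2 v * (moserConst m A * B * sobLp m 2 v) := by
        gcongr
        · exact sobLp_nonneg _ _ _
        · exact sobLp_comp_le hm (hf.of_le hmle) hB (hv.of_le hmle) hper hA
    _ = moserConst m A * B * sobLp m 2 v * sobLp (m + 1) 2 v := mul_comm _ _

/-- Let `f` be smooth, `m ≥ 1`, `A > 0`. There is a constant
`C̃ > 0` depending only on `m`, `A` and the `C^{m+1}` norm of `f` on `[-A,A]`
(encoded here by a bound `B` on that norm) such that for every smooth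
zero-mean `1`-periodic `v` with `|v|_∞ ≤ A`,
`|∫_{S¹} v⁽ᵐ⁾ (f(v))⁽ᵐ⁺¹⁾| ≤ C̃ ‖v‖_m ‖v‖_{m+1}`. -/
theorem statement3 (m : ℕ) (hm : 1 ≤ m) (A B : ℝ) (hA : 0 < A) (hB : 0 < B) :
    ∃ C > 0, ∀ f : ℝ → ℝ, ContDiff ℝ (⊤ : ℕ∞) f →
      (∀ k ≤ m + 1, ∀ y ∈ Icc (-A) A, |iteratedDeriv k f y| ≤ B) →
      ∀ v : ℝ → ℝ, ContDiff ℝ (⊤ : ℕ∞) v → (∀ x, v (x + 1) = v x) →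
        (∫ x in Ioc (0:ℝ) 1, v x) = 0 → (∀ x, |v x| ≤ A) →
        |∫ x in Ioc (0:ℝ) 1, iteratedDeriv m v x * iteratedDeriv (m + 1) (f ∘ v) x|
          ≤ C * sobLp m 2 v * sobLp (m + 1) 2 v := by
  refine ⟨moserConst m A * B, mul_pos (moserConst_pos hm hA) hB,
    fun f hf hfB v hv hper _ hvA => ?_⟩
  exact statement3_general (Nat.one_le_iff_ne_zero.1 hm) (hf.of_le (by exact_mod_cast le_top))
    (fun k hk => hfB k (by lia)) (hv.of_le (by exact_mod_cast le_top)) hper hvA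
end
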